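/- Let B = [β_{i,j}]_{i,j=1}^{m} ∈ ℍ^{m×m} be upper triangular (β_{i,j} = 0 for i > j) and let A ∈ ℍ^{n×n} be such that 𝒳_{[β_{k,k}]}(A) := A² − (β_{k,k} + β̄_{k,k})A + |β_{k,k}|² I_n is invertible for k = 1, …, m. Then for every C ∈ ℍ^{n×m} with columns C_1, …, C_m, the equation AX − XB = C has a unique solution X whose columns X_k are defined recursively by X_1 = (𝒳_{[β_{1,1}]}(A))⁻¹ · (C_1 ρ_{β̄_{1,1}})^{e_ℓ}(A) and, for k = 2, …, m, X_k = (𝒳_{[β_{k,k}]}(A))⁻¹ · (C_k ρ_{β̄_{k,k}})^{e_ℓ}(A) + (𝒳_{[β_{k,k}]}(A))⁻¹ Σ_{j=1}^{k−1} (X_j β_{j,k} ρ_{β̄_{k,k}})^{e_ℓ}(A). -/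

import Mathlib

open Quaternion Matrix

theorem syl_abel {G : Type*} [AddCommGroup G] (p q r s : G) :
    p - q - (r - s) = p - (q + r) + s := by abel

theorem syl_key {n : ℕ} (A W : Matrix (Fin n) (Fin n) ℍ[ℝ]) (b : ℍ[ℝ])
    (hW : W * (A * A - Matrix.diagonal (fun _ => b + star b) * A +
      Matrix.diagonal (fun _ => ((Quaternion.normSq b : ℝ) : ℍ[ℝ]))) = 1)
    (x d : Matrix (Fin n) (Fin 1) ℍ[ℝ])
    (h : A * x - x * Matrix.of (fun (_ _ : Fin 1) => b) = d) :
    x = W * (A * d - d * Matrix.of (fun (_ _ : Fin 1) => star b)) := by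
  have e : A * d - d * Matrix.of (fun (_ _ : Fin 1) => star b) =
      (A * A - Matrix.diagonal (fun _ => b + star b) * A +
      Matrix.diagonal (fun _ => ((Quaternion.normSq b : ℝ) : ℍ[ℝ]))) * x := by
    have h1 : (Matrix.diagonal (fun _ => b + star b) : Matrix (Fin n) (Fin n) ℍ[ℝ]) * (A * x) =
        A * x * Matrix.of (fun (_ _ : Fin 1) => b) +
        A * x * Matrix.of (fun (_ _ : Fin 1) => star b) := by
      generalize A * x = y
      ext1 i j
      have hj : j = 0 := Subsingleton.elim _ _
      subst hj
      rw [Matrix.diagonal_mul, Matrix.add_apply, Matrix.mul_apply, Matrix.mul_apply]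
      simp only [Fin.sum_univ_one, Matrix.of_apply]
      rw [← mul_add, Quaternion.self_add_star']
      exact Quaternion.coe_commutes _ _
    have h2 : (Matrix.diagonal (fun _ => ((Quaternion.normSq b : ℝ) : ℍ[ℝ])) :
        Matrix (Fin n) (Fin n) ℍ[ℝ]) * x =
        x * Matrix.of (fun (_ _ : Fin 1) => b) * Matrix.of (fun (_ _ : Fin 1) => star b) := by
      ext1 i j
      have hj : j = 0 := Subsingleton.elim _ _
      subst hj
      rw [Matrix.diagonal_mul, Matrix.mul_apply]
      simp only [Fin.sum_univ_one, Matrix.of_apply, Matrix.mul_apply]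
      rw [mul_assoc, Quaternion.self_mul_star]
      exact Quaternion.coe_commutes _ _
    rw [Matrix.add_mul, Matrix.sub_mul, Matrix.mul_assoc (Matrix.diagonal _), h1, h2, ← h,
      Matrix.mul_sub, Matrix.sub_mul, Matrix.mul_assoc A A x, Matrix.mul_assoc A x, Matrix.mul_assoc A x]
    exact syl_abel (G := Matrix (Fin n) (Fin 1) ℍ[ℝ]) _ _ _ _
  rw [e, ← Matrix.mul_assoc, hW, Matrix.one_mul]

theorem syl_formula (n m : ℕ)
    (B : Matrix (Fin m) (Fin m) ℍ[ℝ]) (hB : ∀ i j : Fin m, j < i → B i j = 0)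
    (A : Matrix (Fin n) (Fin n) ℍ[ℝ])
    (chi : Fin m → Matrix (Fin n) (Fin n) ℍ[ℝ])
    (hchi : ∀ k, chi k = A * A - Matrix.diagonal (fun _ => B k k + star (B k k)) * A +
      Matrix.diagonal (fun _ => ((Quaternion.normSq (B k k) : ℝ) : ℍ[ℝ])))
    (W : Fin m → Matrix (Fin n) (Fin n) ℍ[ℝ])
    (hW : ∀ k, chi k * W k = 1 ∧ W k * chi k = 1)
    (C : Matrix (Fin n) (Fin m) ℍ[ℝ]) :
      ∀ X : Matrix (Fin n) (Fin m) ℍ[ℝ], A * X - X * B = C →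
        ∀ k : Fin m, (Matrix.of fun ic (_ : Fin 1) => X ic k) =
          W k * (A * (Matrix.of fun ic (_ : Fin 1) => C ic k) -
              (Matrix.of fun ic (_ : Fin 1) => C ic k) *
                Matrix.of (fun (_ _ : Fin 1) => star (B k k))) +
            W k * ∑ j : Fin m, if j < k then
              (A * ((Matrix.of fun ic (_ : Fin 1) => X ic j) *
                  Matrix.of (fun (_ _ : Fin 1) => B j k)) -
                ((Matrix.of fun ic (_ : Fin 1) => X ic j) *
                    Matrix.of (fun (_ _ : Fin 1) => B j k)) *
                  Matrix.of (fun (_ _ : Fin 1) => star (B k k)))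
            else 0 := by
  intro X hX k
  rw [← Matrix.mul_add]
  have hk := (hW k).2
  rw [hchi k] at hk
  have hcol : A * (Matrix.of fun ic (_ : Fin 1) => X ic k) -
      (Matrix.of fun ic (_ : Fin 1) => X ic k) * Matrix.of (fun (_ _ : Fin 1) => B k k) =
      (Matrix.of fun ic (_ : Fin 1) => C ic k) + ∑ j : Fin m, if j < k then
        (Matrix.of fun ic (_ : Fin 1) => X ic j) * Matrix.of (fun (_ _ : Fin 1) => B j k)
        else 0 := by
    ext1 i z
    have h0 := congrFun (congrFun hX i) k
    rw [Matrix.sub_apply, Matrix.mul_apply, Matrix.mul_apply] at h0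
    have h3 : ∑ j, X i j * B j k = X i k * B k k + ∑ j, if j < k then X i j * B j k else 0 := by
      have : ∀ j, X i j * B j k = (if j = k then X i k * B k k else 0) +
          (if j < k then X i j * B j k else 0) := by
        intro j
        rcases lt_trichotomy j k with h | h | h
        · simp [h, h.ne]
        · subst h; simp
        · simp [h.ne', h.not_gt, hB j k h]
      rw [Finset.sum_congr rfl (fun j _ => this j), Finset.sum_add_distrib]
      simp
    rw [h3] at h0
    have h4 : (∑ j : Fin m, if j < k then
        (Matrix.of fun ic (_ : Fin 1) => X ic j) * Matrix.of (fun (_ _ : Fin 1) => B j k)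
        else 0 : Matrix (Fin n) (Fin 1) ℍ[ℝ]) i z = ∑ j, if j < k then X i j * B j k else 0 := by
      rw [Matrix.sum_apply]
      refine Finset.sum_congr rfl fun j _ => ?_
      split_ifs
      · simp [Matrix.mul_apply]
      · rfl
    rw [Matrix.add_apply, h4, Matrix.sub_apply, Matrix.mul_apply, Matrix.mul_apply]
    simp only [Fin.sum_univ_one, Matrix.of_apply]
    rw [← h0]
    abel
  refine (syl_key A (W k) (B k k) hk _ _ hcol).trans ?_
  congr 1
  rw [Matrix.mul_add, Matrix.add_mul, Matrix.mul_sum, Matrix.sum_mul, add_sub_add_comm,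
    ← Finset.sum_sub_distrib]
  congr 1
  refine Finset.sum_congr rfl fun j _ => ?_
  split_ifs
  · rfl
  · rw [Matrix.mul_zero, Matrix.zero_mul, sub_zero]

/-- Let `B ∈ ℍ^{m×m}` be upper triangular and let `A ∈ ℍ^{n×n}` be such
that each `𝒳_{[β_{k,k}]}(A) = A² − (β_{k,k}+β̄_{k,k})A + |β_{k,k}|² I_n` is invertible, with
two-sided inverse `W k`.  Then `AX − XB = C` has a unique solution `X`, whose columns satisfy
`X_k = (𝒳_{[β_{k,k}]}(A))⁻¹ (C_k ρ_{β̄_{k,k}})^{e_ℓ}(A)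
      + (𝒳_{[β_{k,k}]}(A))⁻¹ Σ_{j<k} (X_j β_{j,k} ρ_{β̄_{k,k}})^{e_ℓ}(A)`
(for `k = 0` the sum is empty, giving the initial column).  Here
`(D ρ_{β̄})^{e_ℓ}(A) = AD − Dβ̄` for a column vector `D` (right multiplication by the scalar
`β̄` is realized as multiplication by the `1×1` matrix with entry `β̄`), and columns are
indexed from 0. -/
theorem sylvester_upper_triangular (n m : ℕ)
    (B : Matrix (Fin m) (Fin m) ℍ[ℝ]) (hB : ∀ i j : Fin m, j < i → B i j = 0)
    (A : Matrix (Fin n) (Fin n) ℍ[ℝ])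
    (chi : Fin m → Matrix (Fin n) (Fin n) ℍ[ℝ])
    (hchi : ∀ k, chi k = A * A - Matrix.diagonal (fun _ => B k k + star (B k k)) * A +
      Matrix.diagonal (fun _ => ((Quaternion.normSq (B k k) : ℝ) : ℍ[ℝ])))
    (W : Fin m → Matrix (Fin n) (Fin n) ℍ[ℝ])
    (hW : ∀ k, chi k * W k = 1 ∧ W k * chi k = 1)
    (C : Matrix (Fin n) (Fin m) ℍ[ℝ]) :
    (∃! X : Matrix (Fin n) (Fin m) ℍ[ℝ], A * X - X * B = C) ∧
      ∀ X : Matrix (Fin n) (Fin m) ℍ[ℝ], A * X - X * B = C →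
        ∀ k : Fin m, (Matrix.of fun ic (_ : Fin 1) => X ic k) =
          W k * (A * (Matrix.of fun ic (_ : Fin 1) => C ic k) -
              (Matrix.of fun ic (_ : Fin 1) => C ic k) *
                Matrix.of (fun (_ _ : Fin 1) => star (B k k))) +
            W k * ∑ j : Fin m, if j < k then
              (A * ((Matrix.of fun ic (_ : Fin 1) => X ic j) *
                  Matrix.of (fun (_ _ : Fin 1) => B j k)) -
                ((Matrix.of fun ic (_ : Fin 1) => X ic j) *
                    Matrix.of (fun (_ _ : Fin 1) => B j k)) *
                  Matrix.of (fun (_ _ : Fin 1) => star (B k k)))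
            else 0 := by
  refine ⟨?_, syl_formula n m B hB A chi hchi W hW C⟩
  let L : Matrix (Fin n) (Fin m) ℍ[ℝ] →ₗ[ℝ] Matrix (Fin n) (Fin m) ℍ[ℝ] :=
    { toFun := fun X => A * X - X * B
      map_add' := fun X Y => by rw [Matrix.mul_add, Matrix.add_mul]; abel
      map_smul' := fun r X => by
        rw [Matrix.mul_smul, Matrix.smul_mul, RingHom.id_apply, smul_sub] }
  have hinj : Function.Injective L := by
    rw [injective_iff_map_eq_zero]
    intro X hX
    have hf := syl_formula n m B hB A chi hchi W hW 0 X hX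
    have hz : ∀ N : ℕ, ∀ k : Fin m, (k : ℕ) = N → ∀ i, X i k = 0 := by
      intro N
      induction N using Nat.strong_induction_on with
      | _ N ih =>
        intro k hk i
        have h := congrFun (congrFun (hf k) i) 0
        have z1 : (Matrix.of fun ic (_ : Fin 1) =>
            (0 : Matrix (Fin n) (Fin m) ℍ[ℝ]) ic k) = 0 := rfl
        rw [z1, Finset.sum_eq_zero] at h
        · simpa using h
        · intro j _
          split_ifs with hj
          · have z2 : (Matrix.of fun ic (_ : Fin 1) => X ic j) = 0 := by
              ext1 a c
              exact ih j (hk ▸ hj) j rfl a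
            rw [z2]
            simp
          · rfl
    ext1 i k
    exact hz _ k rfl i
  obtain ⟨X, hX⟩ := (LinearMap.injective_iff_surjective.mp hinj) C
  exact ⟨X, hX, fun Y hY => hinj ((show L Y = C from hY).trans hX.symm)⟩
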